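/- arXiv:2010.09779 — 2 statements merged into one kernel-verified Lean document; each statement's English description precedes it below -/
import Mathlib

section
/- Let u, a, b, y be as in the Painlevé II system below, and assume y(x,w) > 0 for all (x,w). For (x,t,r) ∈ ℝ × (0,∞) × ℝ set s = t^(-1/3)·r + t^(-4/3)·x^2 and define φ_br(x,t,r) = −t^(-2/3)·u(s)^2 + ∂_r^2[ log y(s, t^(-2/3)·x/2) ] (the first summand equals ∂_r^2 log F_GUE(s) for the Tracy–Widom GUE distribution, so φ_br = ∂_r^2 log of the scaled anti-derivative of the Baik–Rains distribution). Then φ_br satisfies the (r-differentiated) KP equation: ∂_r( ∂_t φ_br + φ_br·∂_r φ_br + (1/12)·∂_r^3 φ_br ) + (1/4)·∂_x^2 φ_br = 0 at every point of ℝ × (0,∞) × ℝ. -/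
/-- The left-hand side of the (r-differentiated) KP equation
`∂_r(∂_t φ + φ·∂_r φ + (1/12)·∂_r³ φ) + (1/4)·∂_x² φ` for `φ = φ x t r`. -/
noncomputable def kpDiff (φ : ℝ → ℝ → ℝ → ℝ) (x t r : ℝ) : ℝ :=
  deriv (fun r' => deriv (fun t' => φ x t' r') t
      + φ x t r' * deriv (fun s => φ x t s) r'
      + (1/12) * iteratedDeriv 3 (fun s => φ x t s) r') r
    + (1/4) * iteratedDeriv 2 (fun x' => φ x' t r) x

/-!
Write `φ_br = ∂_r² log τ` with `log τ = log F_GUE + log y`. In the similarity variables `(s, w)` the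
KP equation for `∂₁ ∂₁ T`, `T = log τ`, is the second `s`-derivative of an equation for `T`. That
equation holds for `T = log F_GUE` because of Painlevé II, and for `T = log F_GUE + log y` it then
amounts to a bilinear (Hirota) equation for `y` in the background `(log F_GUE)'' = -u²`.

With `f⁻(s, w) = f(s, -w)`, the products `P = (a a⁻ + b b⁻) / 2`, `Q = a b⁻ + b a⁻` and
`R = a b⁻ - b a⁻` satisfy a closed linear system. The difference `a a⁻ - b b⁻` is a first integral
of the Lax pair, and it is zero. Hence `y` and all its derivatives are linear combinations of `P`,
`Q`, `R`, beginning with `∂₁ y = P`. The Hirota form of `y` is thus quadratic in `P`, `Q`, `R`, and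
it turns out to be `u² / 4` times the Casimir `Q² - 4 P² - R² = -(a a⁻ - b b⁻)² = 0`.
-/

open scoped ContDiff

section PartialDerivatives

variable {𝕜 F : Type*} [NontriviallyNormedField 𝕜] [NormedAddCommGroup F] [NormedSpace 𝕜 F]

/-- The partial derivative `∂₁ f` of a curried function in its first variable, as a curried
function. -/
noncomputable def partialFst (f : 𝕜 → 𝕜 → F) (s w : 𝕜) : F := deriv (fun s' => f s' w) s

/-- The partial derivative `∂₂ f` of a curried function in its second variable, as a curried
function. -/
noncomputable def partialSnd (f : 𝕜 → 𝕜 → F) (s w : 𝕜) : F := deriv (fun w' => f s w') w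

end PartialDerivatives

local prefix:max "∂₁ " => partialFst
local prefix:max "∂₂ " => partialSnd

section PartialDerivatives

variable {𝕜 F : Type*} [NontriviallyNormedField 𝕜] [NormedAddCommGroup F] [NormedSpace 𝕜 F]
  {f : 𝕜 → 𝕜 → F}

lemma partialFst_eq_fderiv (hf : Differentiable 𝕜 fun q : 𝕜 × 𝕜 => f q.1 q.2) (s w : 𝕜) :
    ∂₁ f s w = fderiv 𝕜 (fun q : 𝕜 × 𝕜 => f q.1 q.2) (s, w) (1, 0) :=
  ((hf (s, w)).hasFDerivAt.comp_hasDerivAt (f := fun s' => (s', w)) s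
    ((hasDerivAt_id s).prodMk (hasDerivAt_const s w))).deriv

lemma partialSnd_eq_fderiv (hf : Differentiable 𝕜 fun q : 𝕜 × 𝕜 => f q.1 q.2) (s w : 𝕜) :
    ∂₂ f s w = fderiv 𝕜 (fun q : 𝕜 × 𝕜 => f q.1 q.2) (s, w) (0, 1) :=
  ((hf (s, w)).hasFDerivAt.comp_hasDerivAt (f := fun w' => (s, w')) w
    ((hasDerivAt_const w s).prodMk (hasDerivAt_id w))).deriv

lemma hasDerivAt_comp_partial (hf : Differentiable 𝕜 fun q : 𝕜 × 𝕜 => f q.1 q.2)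
    {g h : 𝕜 → 𝕜} {g' h' x : 𝕜} (hg : HasDerivAt g g' x) (hh : HasDerivAt h h' x) :
    HasDerivAt (fun y => f (g y) (h y)) (g' • ∂₁ f (g x) (h x) + h' • ∂₂ f (g x) (h x)) x := by
  have split : ((g', h') : 𝕜 × 𝕜) = g' • (1, 0) + h' • (0, 1) := by simp
  have chain := (hf (g x, h x)).hasFDerivAt.comp_hasDerivAt x (hg.prodMk hh)
  rwa [split, map_add, map_smul, map_smul, ← partialFst_eq_fderiv hf,
    ← partialSnd_eq_fderiv hf] at chain

lemma hasDerivAt_partialFst (hf : Differentiable 𝕜 fun q : 𝕜 × 𝕜 => f q.1 q.2) (s w : 𝕜) :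
    HasDerivAt (fun s' => f s' w) (∂₁ f s w) s := by
  simpa using hasDerivAt_comp_partial hf (hasDerivAt_id s) (hasDerivAt_const s w)

lemma hasDerivAt_partialSnd (hf : Differentiable 𝕜 fun q : 𝕜 × 𝕜 => f q.1 q.2) (s w : 𝕜) :
    HasDerivAt (fun w' => f s w') (∂₂ f s w) w := by
  simpa using hasDerivAt_comp_partial hf (hasDerivAt_const w s) (hasDerivAt_id w)

lemma contDiff_partialFst {m n : ℕ∞ω} (hf : ContDiff 𝕜 n fun q : 𝕜 × 𝕜 => f q.1 q.2)
    (hmn : m + 1 ≤ n) : ContDiff 𝕜 m fun q : 𝕜 × 𝕜 => ∂₁ f q.1 q.2 := by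
  have hd := hf.differentiable (by rintro rfl; simp at hmn)
  simpa only [partialFst_eq_fderiv hd] using (hf.fderiv_right hmn).clm_apply contDiff_const

lemma contDiff_partialSnd {m n : ℕ∞ω} (hf : ContDiff 𝕜 n fun q : 𝕜 × 𝕜 => f q.1 q.2)
    (hmn : m + 1 ≤ n) : ContDiff 𝕜 m fun q : 𝕜 × 𝕜 => ∂₂ f q.1 q.2 := by
  have hd := hf.differentiable (by rintro rfl; simp at hmn)
  simpa only [partialSnd_eq_fderiv hd] using (hf.fderiv_right hmn).clm_apply contDiff_const

lemma partialFst_partialSnd_comm {n : ℕ∞ω} (hf : ContDiff 𝕜 n fun q : 𝕜 × 𝕜 => f q.1 q.2)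
    (hn : minSmoothness 𝕜 2 ≤ n) : ∂₁ (∂₂ f) = ∂₂ (∂₁ f) := by
  have h2 : 1 + 1 ≤ n := one_add_one_eq_two.trans_le (le_minSmoothness.trans hn)
  have hd := hf.differentiable (by rintro rfl; simp at h2)
  have hd' := (hf.fderiv_right h2).differentiable one_ne_zero
  funext s w
  rw [partialFst_eq_fderiv ((contDiff_partialSnd hf h2).differentiable one_ne_zero),
    partialSnd_eq_fderiv ((contDiff_partialFst hf h2).differentiable one_ne_zero)]
  simp only [partialFst_eq_fderiv hd, partialSnd_eq_fderiv hd, Prod.mk.eta]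
  rw [fderiv_clm_apply (hd' _) (by fun_prop), fderiv_clm_apply (hd' _) (by fun_prop)]
  simpa using hf.contDiffAt.isSymmSndFDerivAt hn (1, 0) (0, 1)

end PartialDerivatives

/-- Smoothness of a real function of two real variables given in curried form. -/
abbrev IsSmooth (f : ℝ → ℝ → ℝ) : Prop := ContDiff ℝ ∞ fun q : ℝ × ℝ => f q.1 q.2

namespace IsSmooth

variable {f : ℝ → ℝ → ℝ}

lemma partialFst (hf : IsSmooth f) : IsSmooth (∂₁ f) := contDiff_partialFst hf (by simp)

lemma partialSnd (hf : IsSmooth f) : IsSmooth (∂₂ f) := contDiff_partialSnd hf (by simp)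

lemma partial_comm (hf : IsSmooth f) : ∂₁ (∂₂ f) = ∂₂ (∂₁ f) :=
  partialFst_partialSnd_comm hf
    (minSmoothness_of_isRCLikeNormedField.trans_le (WithTop.coe_le_coe.2 le_top))

lemma hasDerivAt_fst (hf : IsSmooth f) (s w : ℝ) : HasDerivAt (fun s' => f s' w) (∂₁ f s w) s :=
  hasDerivAt_partialFst (hf.differentiable (by simp)) s w

lemma hasDerivAt_snd (hf : IsSmooth f) (s w : ℝ) : HasDerivAt (fun w' => f s w') (∂₂ f s w) w :=
  hasDerivAt_partialSnd (hf.differentiable (by simp)) s w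

end IsSmooth

section SelfSimilar

variable {f g Φ : ℝ → ℝ → ℝ} {k x t r : ℝ}

/-- The self-similar function of weight `k` on `ℝ × (0, ∞) × ℝ` with profile `f`, in the KP
similarity variables `s = t^(-1/3) r + t^(-4/3) x²` and `w = t^(-2/3) x / 2`. -/
noncomputable def selfSimilar (k : ℝ) (f : ℝ → ℝ → ℝ) (x t r : ℝ) : ℝ :=
  t ^ (-k / 3) *
    f (t ^ (-(1 : ℝ) / 3) * r + t ^ (-(4 : ℝ) / 3) * x ^ 2) (t ^ (-(2 : ℝ) / 3) * x / 2)

/-- The operator on profiles induced by `∂_x` on self-similar functions. -/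
noncomputable def xProfile (f : ℝ → ℝ → ℝ) (s w : ℝ) : ℝ := 4 * w * ∂₁ f s w + 1 / 2 * ∂₂ f s w

/-- The operator on profiles induced by `∂_t` on self-similar functions of weight `k`. -/
noncomputable def tProfile (k : ℝ) (f : ℝ → ℝ → ℝ) (s w : ℝ) : ℝ :=
  -(k / 3) * f s w - (s / 3 + 4 * w ^ 2) * ∂₁ f s w - 2 * w / 3 * ∂₂ f s w

lemma selfSimilar_mul (ht : 0 < t) (l : ℝ) :
    selfSimilar k f x t r * selfSimilar l g x t r =
      selfSimilar (k + l) (fun s w => f s w * g s w) x t r := by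
  have weight : t ^ (-(k + l) / 3) = t ^ (-k / 3) * t ^ (-l / 3) := by
    rw [← Real.rpow_add ht]; ring_nf
  simp only [selfSimilar, weight]
  ring

lemma hasDerivAt_selfSimilar_r (hf : Differentiable ℝ fun q : ℝ × ℝ => f q.1 q.2) (ht : 0 < t) :
    HasDerivAt (fun r => selfSimilar k f x t r) (selfSimilar (k + 1) (∂₁ f) x t r) r := by
  have weight : t ^ (-(k + 1) / 3) = t ^ (-k / 3) * t ^ (-(1 : ℝ) / 3) := by
    rw [← Real.rpow_add ht]; ring_nf
  have hs := ((hasDerivAt_id r).const_mul (t ^ (-(1 : ℝ) / 3))).add_const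
    (t ^ (-(4 : ℝ) / 3) * x ^ 2)
  refine ((hasDerivAt_comp_partial hf hs (hasDerivAt_const r _)).const_mul _).congr_deriv ?_
  simp only [selfSimilar, weight, smul_eq_mul, id]
  ring

lemma hasDerivAt_selfSimilar_x (hf : Differentiable ℝ fun q : ℝ × ℝ => f q.1 q.2) (ht : 0 < t) :
    HasDerivAt (fun x => selfSimilar k f x t r) (selfSimilar (k + 2) (xProfile f) x t r) x := by
  have weight : t ^ (-(k + 2) / 3) = t ^ (-k / 3) * t ^ (-(2 : ℝ) / 3) := by
    rw [← Real.rpow_add ht]; ring_nf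
  have four : t ^ (-(4 : ℝ) / 3) = t ^ (-(2 : ℝ) / 3) * t ^ (-(2 : ℝ) / 3) := by
    rw [← Real.rpow_add ht]; ring_nf
  have hs := (((hasDerivAt_id x).pow 2).const_mul (t ^ (-(4 : ℝ) / 3))).const_add
    (t ^ (-(1 : ℝ) / 3) * r)
  have hw := ((hasDerivAt_id x).const_mul (t ^ (-(2 : ℝ) / 3))).div_const 2
  refine ((hasDerivAt_comp_partial hf hs hw).const_mul _).congr_deriv ?_
  simp only [selfSimilar, xProfile, weight, four, smul_eq_mul, id, Pi.pow_apply]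
  ring

lemma hasDerivAt_selfSimilar_t (hf : Differentiable ℝ fun q : ℝ × ℝ => f q.1 q.2) (ht : 0 < t) :
    HasDerivAt (fun t => selfSimilar k f x t r) (selfSimilar (k + 3) (tProfile k f) x t r) t := by
  have weight (q : ℝ) : HasDerivAt (fun t => t ^ (-q / 3)) (-q / 3 * (t ^ (-q / 3) * t⁻¹)) t :=
    (Real.hasDerivAt_rpow_const (Or.inl ht.ne')).congr_deriv (by rw [Real.rpow_sub_one ht.ne']; rfl)
  have three : t ^ (-(k + 3) / 3) = t ^ (-k / 3) * t⁻¹ := by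
    rw [← Real.rpow_neg_one, ← Real.rpow_add ht]; ring_nf
  have four : t ^ (-(4 : ℝ) / 3) = t ^ (-(2 : ℝ) / 3) * t ^ (-(2 : ℝ) / 3) := by
    rw [← Real.rpow_add ht]; ring_nf
  have hs := ((weight 1).mul_const r).add ((weight 4).mul_const (x ^ 2))
  have hw := ((weight 2).mul_const x).div_const 2
  refine ((weight k).mul (hasDerivAt_comp_partial hf hs hw)).congr_deriv ?_
  simp only [selfSimilar, tProfile, three, four, smul_eq_mul, Pi.add_apply]
  ring

lemma iteratedDeriv_selfSimilar_r (hf : IsSmooth f) (ht : 0 < t) (n : ℕ) :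
    iteratedDeriv n (fun r => selfSimilar k f x t r) =
      fun r => selfSimilar (k + n) (partialFst^[n] f) x t r := by
  induction n generalizing f k with
  | zero => simp
  | succ n ih =>
    have first : deriv (fun r => selfSimilar k f x t r) = selfSimilar (k + 1) (∂₁ f) x t :=
      funext fun _ => (hasDerivAt_selfSimilar_r (hf.differentiable (by simp)) ht).deriv
    rw [iteratedDeriv_succ', first, ih hf.partialFst, Function.iterate_succ_apply]
    push_cast
    ring_nf

/-- The operator on profiles induced by the KP equation on self-similar functions of weight `2`. -/
noncomputable def selfSimilarKP (Φ : ℝ → ℝ → ℝ) (s w : ℝ) : ℝ :=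
  -(1 / 2) * ∂₁ Φ s w - s / 3 * ∂₁ ∂₁ Φ s w + w / 3 * ∂₂ ∂₁ Φ s w + ∂₁ Φ s w ^ 2
    + Φ s w * ∂₁ ∂₁ Φ s w + 1 / 12 * ∂₁ ∂₁ ∂₁ ∂₁ Φ s w + 1 / 16 * ∂₂ ∂₂ Φ s w

lemma xProfile_xProfile (hf : IsSmooth f) (s w : ℝ) :
    xProfile (xProfile f) s w = 16 * w ^ 2 * ∂₁ ∂₁ f s w + 4 * w * ∂₂ ∂₁ f s w
      + 2 * ∂₁ f s w + 1 / 4 * ∂₂ ∂₂ f s w := by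
  have ds : ∂₁ (xProfile f) s w = 4 * w * ∂₁ ∂₁ f s w + 1 / 2 * ∂₂ ∂₁ f s w := by
    rw [← hf.partial_comm]
    exact (((hf.partialFst.hasDerivAt_fst s w).const_mul (4 * w)).add
      ((hf.partialSnd.hasDerivAt_fst s w).const_mul (1 / 2))).deriv
  have dw : ∂₂ (xProfile f) s w =
      4 * ∂₁ f s w + 4 * w * ∂₂ ∂₁ f s w + 1 / 2 * ∂₂ ∂₂ f s w :=
    (((((hasDerivAt_id w).const_mul 4).mul (hf.partialFst.hasDerivAt_snd s w)).add
      ((hf.partialSnd.hasDerivAt_snd s w).const_mul (1 / 2))).congr_deriv (by simp)).deriv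
  rw [xProfile, ds, dw]
  ring

lemma partialFst_tProfile (hf : IsSmooth f) (k s w : ℝ) :
    ∂₁ (tProfile k f) s w = -((k + 1) / 3) * ∂₁ f s w
      - (s / 3 + 4 * w ^ 2) * ∂₁ ∂₁ f s w - 2 * w / 3 * ∂₂ ∂₁ f s w := by
  rw [← hf.partial_comm]
  refine (((((hf.hasDerivAt_fst s w).const_mul (-(k / 3))).sub
    ((((hasDerivAt_id s).div_const 3).add_const (4 * w ^ 2)).mul
      (hf.partialFst.hasDerivAt_fst s w))).sub
    ((hf.partialSnd.hasDerivAt_fst s w).const_mul (2 * w / 3))).congr_deriv ?_).deriv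
  simp only [id]
  ring

/-- The profile of `∂_t φ + φ ∂_r φ + (1/12) ∂_r³ φ` for the self-similar `φ` of weight `2` with
profile `Φ`. -/
noncomputable def fluxProfile (Φ : ℝ → ℝ → ℝ) (s w : ℝ) : ℝ :=
  tProfile 2 Φ s w + Φ s w * ∂₁ Φ s w + 1 / 12 * ∂₁ ∂₁ ∂₁ Φ s w

lemma IsSmooth.xProfile (hf : IsSmooth f) : IsSmooth (xProfile f) := by
  have h₁ := hf.partialFst
  have h₂ := hf.partialSnd
  unfold IsSmooth _root_.xProfile
  fun_prop

lemma IsSmooth.tProfile (hf : IsSmooth f) : IsSmooth (tProfile k f) := by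
  have h₁ := hf.partialFst
  have h₂ := hf.partialSnd
  unfold IsSmooth _root_.tProfile
  fun_prop

lemma IsSmooth.fluxProfile (hΦ : IsSmooth Φ) : IsSmooth (fluxProfile Φ) := by
  have h₁ := hΦ.partialFst
  have h₃ := hΦ.partialFst.partialFst.partialFst
  have ht := hΦ.tProfile (k := 2)
  unfold IsSmooth _root_.fluxProfile
  fun_prop

lemma partialFst_fluxProfile (hΦ : IsSmooth Φ) (s w : ℝ) :
    ∂₁ (fluxProfile Φ) s w = ∂₁ (tProfile 2 Φ) s w + ∂₁ Φ s w ^ 2 + Φ s w * ∂₁ ∂₁ Φ s w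
      + 1 / 12 * ∂₁ ∂₁ ∂₁ ∂₁ Φ s w := by
  refine ((((hΦ.tProfile.hasDerivAt_fst s w).add
    ((hΦ.hasDerivAt_fst s w).mul (hΦ.partialFst.hasDerivAt_fst s w))).add
    ((hΦ.partialFst.partialFst.partialFst.hasDerivAt_fst s w).const_mul (1 / 12))).congr_deriv
    ?_).deriv
  ring

lemma kp_flux_selfSimilar (hΦ : IsSmooth Φ) (ht : 0 < t) :
    deriv (fun t => selfSimilar 2 Φ x t r) t
      + selfSimilar 2 Φ x t r * deriv (fun r => selfSimilar 2 Φ x t r) r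
      + 1 / 12 * iteratedDeriv 3 (fun r => selfSimilar 2 Φ x t r) r =
      selfSimilar 5 (fluxProfile Φ) x t r := by
  have hd : Differentiable ℝ fun q : ℝ × ℝ => Φ q.1 q.2 := hΦ.differentiable (by simp)
  rw [(hasDerivAt_selfSimilar_t hd ht).deriv, (hasDerivAt_selfSimilar_r hd ht).deriv,
    selfSimilar_mul ht, iteratedDeriv_selfSimilar_r hΦ ht]
  simp only [selfSimilar, fluxProfile, Function.iterate_succ_apply, Function.iterate_zero_apply]
  push_cast
  ring_nf

lemma iteratedDeriv_two_selfSimilar_x (hf : IsSmooth f) (ht : 0 < t) :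
    iteratedDeriv 2 (fun x => selfSimilar k f x t r) x =
      selfSimilar (k + 4) (xProfile (xProfile f)) x t r := by
  have first : deriv (fun x => selfSimilar k f x t r) =
      fun x => selfSimilar (k + 2) (xProfile f) x t r :=
    funext fun _ => (hasDerivAt_selfSimilar_x (hf.differentiable (by simp)) ht).deriv
  rw [iteratedDeriv_succ, iteratedDeriv_one, first,
    (hasDerivAt_selfSimilar_x (hf.xProfile.differentiable (by simp)) ht).deriv]
  ring_nf

lemma kpDiff_selfSimilar (hΦ : IsSmooth Φ) (ht : 0 < t) :
    kpDiff (selfSimilar 2 Φ) x t r = selfSimilar 6 (selfSimilarKP Φ) x t r := by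
  have profile (s w) : selfSimilarKP Φ s w =
      ∂₁ (fluxProfile Φ) s w + 1 / 4 * xProfile (xProfile Φ) s w := by
    rw [partialFst_fluxProfile hΦ, partialFst_tProfile hΦ, xProfile_xProfile hΦ, selfSimilarKP]
    ring
  simp only [kpDiff, kp_flux_selfSimilar hΦ ht, iteratedDeriv_two_selfSimilar_x hΦ ht]
  rw [(hasDerivAt_selfSimilar_r (hΦ.fluxProfile.differentiable (by simp)) ht).deriv]
  simp only [selfSimilar, profile]
  ring_nf

end SelfSimilar

section Hirota

variable {f g T L y : ℝ → ℝ → ℝ}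

lemma partialFst_add (hf : IsSmooth f) (hg : IsSmooth g) :
    ∂₁ (fun s w => f s w + g s w) = fun s w => ∂₁ f s w + ∂₁ g s w :=
  funext₂ fun s w => ((hf.hasDerivAt_fst s w).add (hg.hasDerivAt_fst s w)).deriv

lemma partialSnd_add (hf : IsSmooth f) (hg : IsSmooth g) :
    ∂₂ (fun s w => f s w + g s w) = fun s w => ∂₂ f s w + ∂₂ g s w :=
  funext₂ fun s w => ((hf.hasDerivAt_snd s w).add (hg.hasDerivAt_snd s w)).deriv

lemma partialFst_mul (hf : IsSmooth f) (hg : IsSmooth g) :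
    ∂₁ (fun s w => f s w * g s w) = fun s w => ∂₁ f s w * g s w + f s w * ∂₁ g s w :=
  funext₂ fun s w => ((hf.hasDerivAt_fst s w).mul (hg.hasDerivAt_fst s w)).deriv

lemma partialSnd_mul (hf : IsSmooth f) (hg : IsSmooth g) :
    ∂₂ (fun s w => f s w * g s w) = fun s w => ∂₂ f s w * g s w + f s w * ∂₂ g s w :=
  funext₂ fun s w => ((hf.hasDerivAt_snd s w).mul (hg.hasDerivAt_snd s w)).deriv

/-- The left-hand side of the KP equation in similarity variables, integrated twice in `s`: an
equation for `T = log τ`, where `∂₁ ∂₁ T` is the profile of the KP solution. -/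
noncomputable def potentialKP (T : ℝ → ℝ → ℝ) (s w : ℝ) : ℝ :=
  1 / 12 * ∂₁ ∂₁ ∂₁ ∂₁ T s w + 1 / 2 * ∂₁ ∂₁ T s w ^ 2 - s / 3 * ∂₁ ∂₁ T s w
    + 1 / 6 * ∂₁ T s w + w / 3 * ∂₂ ∂₁ T s w + 1 / 16 * ∂₂ ∂₂ T s w

lemma IsSmooth.partialFst_partialSnd_partialSnd (hT : IsSmooth T) :
    ∂₁ (∂₂ (∂₂ T)) = ∂₂ (∂₂ (∂₁ T)) := by
  rw [hT.partialSnd.partial_comm, hT.partial_comm]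

lemma partialFst_potentialKP (hT : IsSmooth T) (s w : ℝ) :
    ∂₁ (potentialKP T) s w = 1 / 12 * ∂₁ ∂₁ ∂₁ ∂₁ ∂₁ T s w
      + ∂₁ ∂₁ T s w * ∂₁ ∂₁ ∂₁ T s w - s / 3 * ∂₁ ∂₁ ∂₁ T s w - 1 / 6 * ∂₁ ∂₁ T s w
      + w / 3 * ∂₂ ∂₁ ∂₁ T s w + 1 / 16 * ∂₂ ∂₂ ∂₁ T s w := by
  have h₂ := hT.partialFst.partialFst
  refine (((((((h₂.partialFst.partialFst.hasDerivAt_fst s w).const_mul (1 / 12)).add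
    (((h₂.hasDerivAt_fst s w).pow 2).const_mul (1 / 2))).sub
    (((hasDerivAt_id s).div_const 3).mul (h₂.hasDerivAt_fst s w))).add
    ((hT.partialFst.hasDerivAt_fst s w).const_mul (1 / 6))).add
    ((hT.partialFst.partialSnd.hasDerivAt_fst s w).const_mul (w / 3))).add
    ((hT.partialSnd.partialSnd.hasDerivAt_fst s w).const_mul (1 / 16))).congr_deriv ?_ |>.deriv
  rw [hT.partialFst.partial_comm, hT.partialFst_partialSnd_partialSnd, id]
  ring

lemma selfSimilarKP_partialFst_partialFst (hT : IsSmooth T) :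
    selfSimilarKP (∂₁ ∂₁ T) = ∂₁ ∂₁ (potentialKP T) := by
  have h₁ := hT.partialFst
  have h₂ := h₁.partialFst
  have h₃ := h₂.partialFst
  funext s w
  rw [funext₂ (partialFst_potentialKP hT)]
  refine (((((((h₃.partialFst.partialFst.hasDerivAt_fst s w).const_mul (1 / 12)).add
    ((h₂.hasDerivAt_fst s w).mul (h₃.hasDerivAt_fst s w))).sub
    (((hasDerivAt_id s).div_const 3).mul (h₃.hasDerivAt_fst s w))).sub
    ((h₂.hasDerivAt_fst s w).const_mul (1 / 6))).add
    ((h₂.partialSnd.hasDerivAt_fst s w).const_mul (w / 3))).add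
    ((h₁.partialSnd.partialSnd.hasDerivAt_fst s w).const_mul (1 / 16))).congr_deriv ?_
    |>.deriv.symm
  rw [h₂.partial_comm, h₁.partialFst_partialSnd_partialSnd, selfSimilarKP, id]
  ring

lemma potentialKP_add (hf : IsSmooth f) (hg : IsSmooth g) (s w : ℝ) :
    potentialKP (fun s w => f s w + g s w) s w =
      potentialKP f s w + potentialKP g s w + ∂₁ ∂₁ f s w * ∂₁ ∂₁ g s w := by
  have hf₁ := hf.partialFst
  have hg₁ := hg.partialFst
  rw [potentialKP, partialFst_add hf hg, partialFst_add hf₁ hg₁,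
    partialFst_add hf₁.partialFst hg₁.partialFst,
    partialFst_add hf₁.partialFst.partialFst hg₁.partialFst.partialFst,
    partialSnd_add hf₁ hg₁, partialSnd_add hf hg, partialSnd_add hf.partialSnd hg.partialSnd,
    potentialKP, potentialKP]
  ring

/-- The bilinear (Hirota) form of the KP equation in similarity variables, in the background `V`:
the equation for `exp L` that is equivalent to `potentialKP L + V * ∂₁ ∂₁ L = 0`. -/
noncomputable def hirotaKP (V y : ℝ → ℝ → ℝ) (s w : ℝ) : ℝ :=
  1 / 12 * (y s w * ∂₁ ∂₁ ∂₁ ∂₁ y s w - 4 * ∂₁ y s w * ∂₁ ∂₁ ∂₁ y s w + 3 * ∂₁ ∂₁ y s w ^ 2)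
    + (V s w - s / 3) * (y s w * ∂₁ ∂₁ y s w - ∂₁ y s w ^ 2) + 1 / 6 * y s w * ∂₁ y s w
    + w / 3 * (y s w * ∂₂ ∂₁ y s w - ∂₁ y s w * ∂₂ y s w)
    + 1 / 16 * (y s w * ∂₂ ∂₂ y s w - ∂₂ y s w ^ 2)

lemma hirotaKP_eq_of_logDeriv (hy : IsSmooth y) (hL : IsSmooth L)
    (h₁ : ∂₁ y = fun s w => y s w * ∂₁ L s w) (h₂ : ∂₂ y = fun s w => y s w * ∂₂ L s w)
    (V : ℝ → ℝ → ℝ) (s w : ℝ) :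
    hirotaKP V y s w = y s w ^ 2 * (potentialKP L s w + V s w * ∂₁ ∂₁ L s w) := by
  have hL₁ := hL.partialFst
  have hy₁ := hy.partialFst
  have y₁₁ : ∂₁ ∂₁ y = fun s w => ∂₁ y s w * ∂₁ L s w + y s w * ∂₁ ∂₁ L s w := by
    conv_lhs => rw [h₁]
    exact partialFst_mul hy hL₁
  have y₁₁₁ : ∂₁ ∂₁ ∂₁ y = fun s w => ∂₁ ∂₁ y s w * ∂₁ L s w + 2 * ∂₁ y s w * ∂₁ ∂₁ L s w
      + y s w * ∂₁ ∂₁ ∂₁ L s w := by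
    conv_lhs => rw [y₁₁]
    refine funext₂ fun s w => (((hy₁.hasDerivAt_fst s w).mul (hL₁.hasDerivAt_fst s w)).add
      ((hy.hasDerivAt_fst s w).mul (hL₁.partialFst.hasDerivAt_fst s w))).deriv.trans ?_
    ring
  have y₁₁₁₁ : ∂₁ ∂₁ ∂₁ ∂₁ y s w = ∂₁ ∂₁ ∂₁ y s w * ∂₁ L s w
      + 3 * ∂₁ ∂₁ y s w * ∂₁ ∂₁ L s w + 3 * ∂₁ y s w * ∂₁ ∂₁ ∂₁ L s w
      + y s w * ∂₁ ∂₁ ∂₁ ∂₁ L s w := by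
    conv_lhs => rw [y₁₁₁]
    refine ((((hy₁.partialFst.hasDerivAt_fst s w).mul (hL₁.hasDerivAt_fst s w)).add
      (((hy₁.hasDerivAt_fst s w).const_mul 2).mul (hL₁.partialFst.hasDerivAt_fst s w))).add
      ((hy.hasDerivAt_fst s w).mul (hL₁.partialFst.partialFst.hasDerivAt_fst s w))).deriv.trans ?_
    ring
  have y₂₁ : ∂₂ ∂₁ y = fun s w => ∂₂ y s w * ∂₁ L s w + y s w * ∂₂ ∂₁ L s w := by
    conv_lhs => rw [h₁]
    exact partialSnd_mul hy hL₁
  have y₂₂ : ∂₂ ∂₂ y = fun s w => ∂₂ y s w * ∂₂ L s w + y s w * ∂₂ ∂₂ L s w := by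
    conv_lhs => rw [h₂]
    exact partialSnd_mul hy hL.partialSnd
  rw [hirotaKP, y₁₁₁₁, y₁₁₁, y₁₁, y₂₁, y₂₂, h₁, h₂, potentialKP]
  ring

lemma IsSmooth.log (hy : IsSmooth y) (hy₀ : ∀ s w, y s w ≠ 0) :
    IsSmooth fun s w => Real.log (y s w) :=
  ContDiff.log hy fun q => hy₀ q.1 q.2

lemma hirotaKP_eq_potentialKP_log (hy : IsSmooth y) (hy₀ : ∀ s w, y s w ≠ 0)
    (V : ℝ → ℝ → ℝ) (s w : ℝ) :
    hirotaKP V y s w = y s w ^ 2 * (potentialKP (fun s w => Real.log (y s w)) s w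
      + V s w * ∂₁ ∂₁ (fun s w => Real.log (y s w)) s w) := by
  refine hirotaKP_eq_of_logDeriv hy (hy.log hy₀) (funext₂ fun s w => ?_)
    (funext₂ fun s w => ?_) V s w
  · change _ = y s w * deriv (fun s' => Real.log (y s' w)) s
    rw [((hy.hasDerivAt_fst s w).log (hy₀ s w)).deriv, mul_div_cancel₀ _ (hy₀ s w)]
  · change _ = y s w * deriv (fun w' => Real.log (y s w')) w
    rw [((hy.hasDerivAt_snd s w).log (hy₀ s w)).deriv, mul_div_cancel₀ _ (hy₀ s w)]

lemma potentialKP_add_log_eq_zero (hg : IsSmooth g) (hg₀ : ∀ s w, potentialKP g s w = 0)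
    (hy : IsSmooth y) (hy₀ : ∀ s w, y s w ≠ 0) (hirota : ∀ s w, hirotaKP (∂₁ ∂₁ g) y s w = 0)
    (s w : ℝ) : potentialKP (fun s w => g s w + Real.log (y s w)) s w = 0 := by
  have h := hirota s w
  rw [hirotaKP_eq_potentialKP_log hy hy₀, mul_eq_zero_iff_left (pow_ne_zero 2 (hy₀ s w))] at h
  rw [potentialKP_add hg (hy.log hy₀), hg₀, zero_add, h]

lemma kpDiff_selfSimilar_eq_zero (hT : IsSmooth T) (hT₀ : ∀ s w, potentialKP T s w = 0)
    {x t r : ℝ} (ht : 0 < t) : kpDiff (selfSimilar 2 (∂₁ ∂₁ T)) x t r = 0 := by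
  have profile_zero : potentialKP T = fun _ _ => 0 := funext₂ hT₀
  rw [kpDiff_selfSimilar hT.partialFst.partialFst ht, selfSimilarKP_partialFst_partialFst hT,
    profile_zero]
  simp [selfSimilar, partialFst]

end Hirota

section PainleveII

/-- Smooth solutions of the Painlevé II equation `u'' = 2 u³ + s u`. -/
structure IsPainleveII (u : ℝ → ℝ) : Prop where
  contDiff : ContDiff ℝ ∞ u
  deriv_deriv (s : ℝ) : deriv (deriv u) s = 2 * u s ^ 3 + s * u s

/-- The logarithm, up to an additive constant, of the tau function of the Painlevé II solution `u`:
its second derivative is `-u²`, as for `log F_GUE` and the Hastings–McLeod solution. -/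
noncomputable def painleveLogTau (u : ℝ → ℝ) (s : ℝ) : ℝ :=
  ∫ x in (0)..s, (deriv u x ^ 2 - u x ^ 4 - x * u x ^ 2)

namespace IsPainleveII

variable {u : ℝ → ℝ}

lemma hasDerivAt (hu : IsPainleveII u) (s : ℝ) : HasDerivAt u (deriv u s) s :=
  (hu.contDiff.differentiable (by simp) s).hasDerivAt

lemma contDiff_deriv (hu : IsPainleveII u) : ContDiff ℝ ∞ (deriv u) :=
  (contDiff_infty_iff_deriv.1 hu.contDiff).2

lemma hasDerivAt_deriv (hu : IsPainleveII u) (s : ℝ) :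
    HasDerivAt (deriv u) (2 * u s ^ 3 + s * u s) s :=
  hu.deriv_deriv s ▸ (hu.contDiff_deriv.differentiable (by simp) s).hasDerivAt

lemma hasDerivAt_logTau (hu : IsPainleveII u) (s : ℝ) :
    HasDerivAt (painleveLogTau u) (deriv u s ^ 2 - u s ^ 4 - s * u s ^ 2) s := by
  have hu₀ := hu.contDiff.continuous
  have hu₁ := hu.contDiff_deriv.continuous
  exact (Continuous.integral_hasStrictDerivAt (by fun_prop) 0 s).hasDerivAt

lemma deriv_logTau (hu : IsPainleveII u) :
    deriv (painleveLogTau u) = fun s => deriv u s ^ 2 - u s ^ 4 - s * u s ^ 2 :=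
  funext fun s => (hu.hasDerivAt_logTau s).deriv

lemma contDiff_logTau (hu : IsPainleveII u) : ContDiff ℝ ∞ (painleveLogTau u) := by
  have hu₀ := hu.contDiff
  refine contDiff_infty_iff_deriv.2 ⟨fun s => (hu.hasDerivAt_logTau s).differentiableAt, ?_⟩
  rw [hu.deriv_logTau]
  fun_prop

lemma deriv_deriv_logTau (hu : IsPainleveII u) :
    deriv (deriv (painleveLogTau u)) = fun s => -u s ^ 2 := by
  rw [hu.deriv_logTau]
  refine funext fun s => (((((hu.hasDerivAt_deriv s).pow 2).sub ((hu.hasDerivAt s).pow 4)).sub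
    ((hasDerivAt_id s).mul ((hu.hasDerivAt s).pow 2))).congr_deriv ?_).deriv
  simp only [id, Pi.pow_apply]
  ring

lemma partialFst_partialFst_logTau (hu : IsPainleveII u) :
    ∂₁ ∂₁ (fun s _ => painleveLogTau u s) = fun s _ => -u s ^ 2 :=
  funext₂ fun s _ => congrFun hu.deriv_deriv_logTau s

lemma isSmooth_logTau (hu : IsPainleveII u) : IsSmooth fun s _ => painleveLogTau u s :=
  hu.contDiff_logTau.comp contDiff_fst

lemma potentialKP_logTau (hu : IsPainleveII u) (s w : ℝ) :
    potentialKP (fun s _ => painleveLogTau u s) s w = 0 := by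
  have third : deriv (fun s => -u s ^ 2) = fun s => -(2 * u s * deriv u s) :=
    funext fun s => ((hu.hasDerivAt s).pow 2).neg.deriv.trans (by simp)
  have fourth : deriv (fun s => -(2 * u s * deriv u s)) s =
      -(2 * deriv u s ^ 2 + 2 * u s * (2 * u s ^ 3 + s * u s)) :=
    (((hu.hasDerivAt s).const_mul 2).mul (hu.hasDerivAt_deriv s)).neg.deriv.trans (by ring)
  have hs : ∂₁ (fun s (_ : ℝ) => painleveLogTau u s) s w = deriv u s ^ 2 - u s ^ 4 - s * u s ^ 2 :=
    congrFun hu.deriv_logTau s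
  rw [potentialKP, hu.partialFst_partialFst_logTau, hs]
  simp only [partialFst, partialSnd, third, fourth, deriv_const]
  ring

end IsPainleveII

end PainleveII

section LaxPair

variable {u : ℝ → ℝ} {a b P Q R : ℝ → ℝ → ℝ}

/-- Solutions of the `sl₂`-adjoint (squared-eigenfunction) form of the Painlevé II Lax pair: the
system satisfied by the quadratic products of two solutions of the Lax pair itself. -/
structure IsSquaredLaxSolution (u : ℝ → ℝ) (P Q R : ℝ → ℝ → ℝ) : Prop where
  isSmooth₁ : IsSmooth P
  isSmooth₂ : IsSmooth Q
  isSmooth₃ : IsSmooth R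
  partialFst₁ (s w : ℝ) : ∂₁ P s w = u s * Q s w
  partialFst₂ (s w : ℝ) : ∂₁ Q s w = 4 * u s * P s w + 2 * w * R s w
  partialFst₃ (s w : ℝ) : ∂₁ R s w = 2 * w * Q s w
  partialSnd₁ (s w : ℝ) : ∂₂ P s w = 2 * deriv u s * R s w - 4 * w * u s * Q s w
  partialSnd₂ (s w : ℝ) :
    ∂₂ Q s w = -(16 * w * u s * P s w) - (8 * w ^ 2 - 2 * s - 4 * u s ^ 2) * R s w
  partialSnd₃ (s w : ℝ) :
    ∂₂ R s w = -(8 * deriv u s * P s w) - (8 * w ^ 2 - 2 * s - 4 * u s ^ 2) * Q s w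

/-- The tau function of a squared Lax solution: an `s`-antiderivative of `P`, solving the bilinear
KP equation in the background `-u²` where the Casimir `Q² - 4 P² - R²` vanishes. -/
noncomputable def squaredLaxTau (u : ℝ → ℝ) (P Q R : ℝ → ℝ → ℝ) (s w : ℝ) : ℝ :=
  (2 * u s ^ 2 + s - 4 * w ^ 2) * P s w - deriv u s * Q s w + 2 * w * u s * R s w

namespace IsSquaredLaxSolution

lemma partialFst_tau (h : IsSquaredLaxSolution u P Q R) (hu : IsPainleveII u) :
    ∂₁ (squaredLaxTau u P Q R) = P := by
  refine funext₂ fun s w => ((((((((hu.hasDerivAt s).pow 2).const_mul 2).add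
    (hasDerivAt_id s)).sub_const (4 * w ^ 2)).mul (h.isSmooth₁.hasDerivAt_fst s w)).sub
    ((hu.hasDerivAt_deriv s).mul (h.isSmooth₂.hasDerivAt_fst s w))).add
    (((hu.hasDerivAt s).const_mul (2 * w)).mul
      (h.isSmooth₃.hasDerivAt_fst s w))).deriv.trans ?_
  simp only [h.partialFst₁, h.partialFst₂, h.partialFst₃, id, Pi.add_apply, Pi.pow_apply]
  ring

lemma partialSnd_tau (h : IsSquaredLaxSolution u P Q R) :
    ∂₂ (squaredLaxTau u P Q R) = fun s w => -(8 * w * P s w) + 2 * u s * R s w := by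
  refine funext₂ fun s w => (((((((hasDerivAt_id w).pow 2).const_mul 4).const_sub
    (2 * u s ^ 2 + s)).mul (h.isSmooth₁.hasDerivAt_snd s w)).sub
    ((h.isSmooth₂.hasDerivAt_snd s w).const_mul (deriv u s))).add
    ((((hasDerivAt_id w).const_mul 2).mul_const (u s)).mul
      (h.isSmooth₃.hasDerivAt_snd s w))).deriv.trans ?_
  simp only [h.partialSnd₁, h.partialSnd₂, h.partialSnd₃, id, Pi.pow_apply]
  ring

lemma partialSnd_partialSnd_tau (h : IsSquaredLaxSolution u P Q R) (s w : ℝ) :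
    ∂₂ ∂₂ (squaredLaxTau u P Q R) s w =
      -(8 * P s w) - 8 * w * (2 * deriv u s * R s w - 4 * w * u s * Q s w)
        - 2 * u s * (8 * deriv u s * P s w + (8 * w ^ 2 - 2 * s - 4 * u s ^ 2) * Q s w) := by
  rw [h.partialSnd_tau]
  refine ((((hasDerivAt_id w).const_mul 8).mul (h.isSmooth₁.hasDerivAt_snd s w)).neg.add
    ((h.isSmooth₃.hasDerivAt_snd s w).const_mul (2 * u s))).deriv.trans ?_
  rw [h.partialSnd₁, h.partialSnd₃, id]
  ring

lemma hirotaKP_tau (h : IsSquaredLaxSolution u P Q R) (hu : IsPainleveII u) (s w : ℝ) :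
    hirotaKP (fun s _ => -u s ^ 2) (squaredLaxTau u P Q R) s w =
      u s ^ 2 / 4 * (Q s w ^ 2 - 4 * P s w ^ 2 - R s w ^ 2) := by
  have P₁ : ∂₁ P = fun s w => u s * Q s w := funext₂ h.partialFst₁
  have P₁₁ : ∂₁ (fun s w => u s * Q s w) = fun s w =>
      deriv u s * Q s w + u s * (4 * u s * P s w + 2 * w * R s w) :=
    funext₂ fun s w => h.partialFst₂ s w ▸
      ((hu.hasDerivAt s).mul (h.isSmooth₂.hasDerivAt_fst s w)).deriv
  have P₁₁₁ : ∂₁ (fun s w => deriv u s * Q s w + u s * (4 * u s * P s w + 2 * w * R s w)) s w =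
      (6 * u s ^ 2 + s + 4 * w ^ 2) * u s * Q s w
        + 4 * deriv u s * (3 * u s * P s w + w * R s w) := by
    refine ((((hu.hasDerivAt_deriv s).mul (h.isSmooth₂.hasDerivAt_fst s w)).add
      ((hu.hasDerivAt s).mul ((((hu.hasDerivAt s).const_mul 4).mul
        (h.isSmooth₁.hasDerivAt_fst s w)).add
        ((h.isSmooth₃.hasDerivAt_fst s w).const_mul (2 * w)))))).deriv.trans ?_
    simp only [h.partialFst₁, h.partialFst₂, h.partialFst₃, Pi.add_apply, Pi.mul_apply]
    ring
  rw [hirotaKP, h.partialSnd_partialSnd_tau, h.partialFst_tau hu, h.partialSnd_tau,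
    h.partialSnd₁, P₁, P₁₁, P₁₁₁, squaredLaxTau]
  ring

end IsSquaredLaxSolution

/-- Smooth solutions `(a, b)` of the Lax pair of Painlevé II with potential `u` and spectral
parameter `w`. -/
structure IsLaxSolution (u : ℝ → ℝ) (a b : ℝ → ℝ → ℝ) : Prop where
  isSmooth_fst : IsSmooth a
  isSmooth_snd : IsSmooth b
  partialFst_fst (s w : ℝ) : ∂₁ a s w = u s * b s w
  partialFst_snd (s w : ℝ) : ∂₁ b s w = u s * a s w - 2 * w * b s w
  partialSnd_fst (s w : ℝ) :
    ∂₂ a s w = 2 * u s ^ 2 * a s w - (4 * w * u s + 2 * deriv u s) * b s w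
  partialSnd_snd (s w : ℝ) : ∂₂ b s w = (-(4 * w * u s) + 2 * deriv u s) * a s w
    + (8 * w ^ 2 - 2 * s - 2 * u s ^ 2) * b s w

section ReflectedProducts

variable {f g : ℝ → ℝ → ℝ}

lemma IsSmooth.mul_comp_neg (hf : IsSmooth f) (hg : IsSmooth g) :
    IsSmooth fun s w => f s w * g s (-w) :=
  ContDiff.mul hf (hg.comp (contDiff_fst.prodMk contDiff_snd.neg))

lemma IsSmooth.hasDerivAt_fst_mul_comp_neg (hf : IsSmooth f) (hg : IsSmooth g) (s w : ℝ) :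
    HasDerivAt (fun s' => f s' w * g s' (-w))
      (∂₁ f s w * g s (-w) + f s w * ∂₁ g s (-w)) s :=
  (hf.hasDerivAt_fst s w).mul (hg.hasDerivAt_fst s (-w))

lemma IsSmooth.hasDerivAt_snd_mul_comp_neg (hf : IsSmooth f) (hg : IsSmooth g) (s w : ℝ) :
    HasDerivAt (fun w' => f s w' * g s (-w'))
      (∂₂ f s w * g s (-w) - f s w * ∂₂ g s (-w)) w :=
  ((hf.hasDerivAt_snd s w).mul ((hg.hasDerivAt_snd s (-w)).comp w (hasDerivAt_neg w))).congr_deriv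
    (by simp only [Function.comp_apply]; ring)

end ReflectedProducts

lemma eq_of_partials_eq_zero {f : ℝ → ℝ → ℝ} (hf : IsSmooth f) (h₁ : ∀ s w, ∂₁ f s w = 0)
    (h₂ : ∀ s w, ∂₂ f s w = 0) (s w s' w' : ℝ) : f s w = f s' w' :=
  calc f s w = f s' w := is_const_of_deriv_eq_zero
        (fun s => (hf.hasDerivAt_fst s w).differentiableAt) (fun s => h₁ s w) s s'
    _ = f s' w' := is_const_of_deriv_eq_zero
        (fun w => (hf.hasDerivAt_snd s' w).differentiableAt) (h₂ s') w w'

namespace IsLaxSolution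

lemma isSquaredLaxSolution (h : IsLaxSolution u a b) :
    IsSquaredLaxSolution u (fun s w => (a s w * a s (-w) + b s w * b s (-w)) / 2)
      (fun s w => a s w * b s (-w) + b s w * a s (-w))
      (fun s w => a s w * b s (-w) - b s w * a s (-w)) := by
  have ha := h.isSmooth_fst
  have hb := h.isSmooth_snd
  refine ⟨((ha.mul_comp_neg ha).add (hb.mul_comp_neg hb)).div_const 2,
    (ha.mul_comp_neg hb).add (hb.mul_comp_neg ha), (ha.mul_comp_neg hb).sub (hb.mul_comp_neg ha),
    fun s w => (((ha.hasDerivAt_fst_mul_comp_neg ha s w).add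
      (hb.hasDerivAt_fst_mul_comp_neg hb s w)).div_const 2).deriv.trans ?_,
    fun s w => ((ha.hasDerivAt_fst_mul_comp_neg hb s w).add
      (hb.hasDerivAt_fst_mul_comp_neg ha s w)).deriv.trans ?_,
    fun s w => ((ha.hasDerivAt_fst_mul_comp_neg hb s w).sub
      (hb.hasDerivAt_fst_mul_comp_neg ha s w)).deriv.trans ?_,
    fun s w => (((ha.hasDerivAt_snd_mul_comp_neg ha s w).add
      (hb.hasDerivAt_snd_mul_comp_neg hb s w)).div_const 2).deriv.trans ?_,
    fun s w => ((ha.hasDerivAt_snd_mul_comp_neg hb s w).add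
      (hb.hasDerivAt_snd_mul_comp_neg ha s w)).deriv.trans ?_,
    fun s w => ((ha.hasDerivAt_snd_mul_comp_neg hb s w).sub
      (hb.hasDerivAt_snd_mul_comp_neg ha s w)).deriv.trans ?_⟩
  all_goals
    simp only [h.partialFst_fst, h.partialFst_snd, h.partialSnd_fst, h.partialSnd_snd]
    ring

lemma mul_comp_neg_sub_mul_comp_neg_eq (h : IsLaxSolution u a b) (s w s' w' : ℝ) :
    a s w * a s (-w) - b s w * b s (-w) = a s' w' * a s' (-w') - b s' w' * b s' (-w') := by
  have ha := h.isSmooth_fst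
  have hb := h.isSmooth_snd
  refine eq_of_partials_eq_zero (f := fun s w => a s w * a s (-w) - b s w * b s (-w))
    ((ha.mul_comp_neg ha).sub (hb.mul_comp_neg hb))
    (fun s w => ((ha.hasDerivAt_fst_mul_comp_neg ha s w).sub
      (hb.hasDerivAt_fst_mul_comp_neg hb s w)).deriv.trans ?_)
    (fun s w => ((ha.hasDerivAt_snd_mul_comp_neg ha s w).sub
      (hb.hasDerivAt_snd_mul_comp_neg hb s w)).deriv.trans ?_) s w s' w'
  all_goals
    simp only [h.partialFst_fst, h.partialFst_snd, h.partialSnd_fst, h.partialSnd_snd]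
    ring

lemma mul_comp_neg_eq_mul_comp_neg (h : IsLaxSolution u a b) (h₀ : a 0 0 ^ 2 = b 0 0 ^ 2)
    (s w : ℝ) : a s w * a s (-w) = b s w * b s (-w) := by
  have conserved := h.mul_comp_neg_sub_mul_comp_neg_eq s w 0 0
  rw [neg_zero] at conserved
  linear_combination conserved + h₀

end IsLaxSolution

end LaxPair

section BaikRains

variable {u : ℝ → ℝ} {a b : ℝ → ℝ → ℝ}

/-- The factor `y` with which the Baik–Rains distribution is built from the Lax pair solution
`(a, b)`. -/
noncomputable def baikRainsFactor (u : ℝ → ℝ) (a b : ℝ → ℝ → ℝ) (s w : ℝ) : ℝ :=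
  (2 * u s ^ 2 + s - 4 * w ^ 2) * a s w * a s (-w)
    - (deriv u s + 2 * w * u s) * b s w * a s (-w)
    - (deriv u s - 2 * w * u s) * a s w * b s (-w)

lemma baikRainsFactor_eq_squaredLaxTau (h : ∀ s w, a s w * a s (-w) = b s w * b s (-w)) :
    baikRainsFactor u a b = squaredLaxTau u
      (fun s w => (a s w * a s (-w) + b s w * b s (-w)) / 2)
      (fun s w => a s w * b s (-w) + b s w * a s (-w))
      (fun s w => a s w * b s (-w) - b s w * a s (-w)) := by
  funext s w
  rw [baikRainsFactor, squaredLaxTau]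
  linear_combination (2 * u s ^ 2 + s - 4 * w ^ 2) / 2 * h s w

lemma isSmooth_baikRainsFactor (hu : ContDiff ℝ ∞ u) (ha : IsSmooth a) (hb : IsSmooth b) :
    IsSmooth (baikRainsFactor u a b) := by
  unfold IsSmooth baikRainsFactor
  fun_prop

lemma hirotaKP_baikRainsFactor (hu : IsPainleveII u) (h : IsLaxSolution u a b)
    (h₀ : a 0 0 ^ 2 = b 0 0 ^ 2) (s w : ℝ) :
    hirotaKP (fun s _ => -u s ^ 2) (baikRainsFactor u a b) s w = 0 := by
  rw [baikRainsFactor_eq_squaredLaxTau (h.mul_comp_neg_eq_mul_comp_neg h₀),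
    h.isSquaredLaxSolution.hirotaKP_tau hu]
  linear_combination
    -(u s ^ 2 / 4) * (a s w * a s (-w) - b s w * b s (-w)) * h.mul_comp_neg_eq_mul_comp_neg h₀ s w

/-- The logarithm `log τ = log F_GUE + log y` of the tau function behind `φ_br`, in similarity
variables. -/
noncomputable def baikRainsLogTau (u : ℝ → ℝ) (a b : ℝ → ℝ → ℝ) (s w : ℝ) : ℝ :=
  painleveLogTau u s + Real.log (baikRainsFactor u a b s w)

lemma selfSimilar_partialFst_partialFst_baikRainsLogTau (hu : IsPainleveII u)
    (hy : IsSmooth (baikRainsFactor u a b)) (hy₀ : ∀ s w, baikRainsFactor u a b s w ≠ 0)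
    {t : ℝ} (ht : 0 < t) (x r : ℝ) :
    selfSimilar 2 (∂₁ ∂₁ (baikRainsLogTau u a b)) x t r =
      -(t ^ (-(2 : ℝ) / 3)) * u (t ^ (-(1 : ℝ) / 3) * r + t ^ (-(4 : ℝ) / 3) * x ^ 2) ^ 2
        + iteratedDeriv 2 (fun r' => Real.log (baikRainsFactor u a b
            (t ^ (-(1 : ℝ) / 3) * r' + t ^ (-(4 : ℝ) / 3) * x ^ 2)
            (t ^ (-(2 : ℝ) / 3) * x / 2))) r := by
  have hlog := hy.log hy₀
  have log_part := congrFun (iteratedDeriv_selfSimilar_r (k := 0) (x := x) hlog ht 2) r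
  have split : ∂₁ ∂₁ (baikRainsLogTau u a b) = fun s w =>
      -u s ^ 2 + ∂₁ ∂₁ (fun s w => Real.log (baikRainsFactor u a b s w)) s w := by
    unfold baikRainsLogTau
    rw [partialFst_add hu.isSmooth_logTau hlog,
      partialFst_add hu.isSmooth_logTau.partialFst hlog.partialFst, hu.partialFst_partialFst_logTau]
  simp only [selfSimilar, neg_zero, zero_div, Real.rpow_zero, one_mul, zero_add, Nat.cast_ofNat,
    Function.iterate_succ_apply, Function.iterate_zero_apply] at log_part
  rw [log_part, split, selfSimilar]
  ring

lemma kpDiff_congr {φ ψ : ℝ → ℝ → ℝ → ℝ} {t : ℝ}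
    (h : ∀ᶠ t' in nhds t, ∀ x r, φ x t' r = ψ x t' r) (x r : ℝ) :
    kpDiff φ x t r = kpDiff ψ x t r := by
  have at_t (x r : ℝ) : φ x t r = ψ x t r := h.self_of_nhds x r
  have time (r : ℝ) : deriv (fun t' => φ x t' r) t = deriv (fun t' => ψ x t' r) t :=
    Filter.EventuallyEq.deriv_eq (h.mono fun _ ht' => ht' x r)
  simp only [kpDiff, at_t, time]

theorem baikRains_solves_KP_general (hu : IsPainleveII u) (h : IsLaxSolution u a b)
    (h₀ : a 0 0 ^ 2 = b 0 0 ^ 2) (hpos : ∀ s w, 0 < baikRainsFactor u a b s w)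
    (x t r : ℝ) (ht : 0 < t) :
    kpDiff (fun x t r =>
      -(t ^ (-(2 : ℝ) / 3)) * u (t ^ (-(1 : ℝ) / 3) * r + t ^ (-(4 : ℝ) / 3) * x ^ 2) ^ 2
        + iteratedDeriv 2 (fun r' => Real.log (baikRainsFactor u a b
            (t ^ (-(1 : ℝ) / 3) * r' + t ^ (-(4 : ℝ) / 3) * x ^ 2)
            (t ^ (-(2 : ℝ) / 3) * x / 2))) r) x t r = 0 := by
  have hy := isSmooth_baikRainsFactor hu.contDiff h.isSmooth_fst h.isSmooth_snd
  have hy₀ (s w : ℝ) : baikRainsFactor u a b s w ≠ 0 := (hpos s w).ne'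
  have hT : IsSmooth (baikRainsLogTau u a b) := hu.isSmooth_logTau.add (hy.log hy₀)
  have potential : ∀ s w, potentialKP (baikRainsLogTau u a b) s w = 0 :=
    potentialKP_add_log_eq_zero hu.isSmooth_logTau hu.potentialKP_logTau hy hy₀
      (hu.partialFst_partialFst_logTau ▸ hirotaKP_baikRainsFactor hu h h₀)
  refine (kpDiff_congr ?_ x r).trans (kpDiff_selfSimilar_eq_zero hT potential ht)
  filter_upwards [lt_mem_nhds ht] with t' ht' x r
  exact (selfSimilar_partialFst_partialFst_baikRainsLogTau hu hy hy₀ ht' x r).symm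

end BaikRains

/-- the second logarithmic r-derivative φ_br of the scaled anti-derivative of the Baik–Rains distribution, φ_br(x,t,r) = −t^{-2/3}·u(s)² + ∂_r²[log y(s, t^{-2/3}x/2)] with s = t^{-1/3}r + t^{-4/3}x², satisfies the (r-differentiated) KP equation on ℝ × (0,∞) × ℝ. -/
theorem baikRains_solves_KP
    (u : ℝ → ℝ) (a b y : ℝ → ℝ → ℝ)
    (hu : ContDiff ℝ (⊤ : ℕ∞) u)
    (hP2 : ∀ x : ℝ, deriv (deriv u) x = 2 * u x ^ 3 + x * u x)
    (ha : ContDiff ℝ (⊤ : ℕ∞) (fun p : ℝ × ℝ => a p.1 p.2))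
    (hb : ContDiff ℝ (⊤ : ℕ∞) (fun p : ℝ × ℝ => b p.1 p.2))
    (hax : ∀ x w : ℝ, deriv (fun x' => a x' w) x = u x * b x w)
    (hbx : ∀ x w : ℝ, deriv (fun x' => b x' w) x = u x * a x w - 2 * w * b x w)
    (haw : ∀ x w : ℝ, deriv (fun w' => a x w') w
      = 2 * u x ^ 2 * a x w - (4 * w * u x + 2 * deriv u x) * b x w)
    (hbw : ∀ x w : ℝ, deriv (fun w' => b x w') w
      = (-(4 * w * u x) + 2 * deriv u x) * a x w
        + (8 * w ^ 2 - 2 * x - 2 * u x ^ 2) * b x w)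
    (hab : ∀ x w : ℝ, a x w = -b x (-w) * Real.exp (8 * w ^ 3 / 3 - 2 * w * x))
    (hba : ∀ x w : ℝ, b x w = -a x (-w) * Real.exp (8 * w ^ 3 / 3 - 2 * w * x))
    (hy : ∀ x w : ℝ, y x w
      = (2 * u x ^ 2 + x - 4 * w ^ 2) * a x w * a x (-w)
        - (deriv u x + 2 * w * u x) * b x w * a x (-w)
        - (deriv u x - 2 * w * u x) * a x w * b x (-w))
    (hypos : ∀ x w : ℝ, 0 < y x w) :
    ∀ x t r : ℝ, 0 < t →
      kpDiff (fun x t r =>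
        -(t ^ (-(2:ℝ)/3)) * u (t ^ (-(1:ℝ)/3) * r + t ^ (-(4:ℝ)/3) * x ^ 2) ^ 2
          + iteratedDeriv 2 (fun r' =>
              Real.log (y (t ^ (-(1:ℝ)/3) * r' + t ^ (-(4:ℝ)/3) * x ^ 2)
                (t ^ (-(2:ℝ)/3) * x / 2))) r) x t r = 0 := by
  obtain rfl : y = baikRainsFactor u a b := funext₂ hy
  exact baikRains_solves_KP_general ⟨hu, hP2⟩ ⟨ha, hb, hax, hbx, haw, hbw⟩
    (by rw [hab 0 0]; simp) hypos
end

section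
/- Let u, a, b, y be as in the Painlevé II system below. Then for all (x,w) ∈ ℝ × ℝ: ∂_x^2 y(x,w) = u(x)·b(x,w)·a(x,−w) + u(x)·a(x,w)·b(x,−w). -/
/-!
Fix `w`. The pairs `(a(·, w), b(·, w))` and `(a(·, -w), b(·, -w))` solve the same linear system in
`x` with opposite spectral parameters, so `D = a(x, w) a(x, -w) - b(x, w) b(x, -w)` satisfies
`∂ₓ D = 0`. Painlevé II makes `y - D u²` a primitive of `a(x, w) a(x, -w)`, whence
`∂ₓ² y = ∂ₓ (a(x, w) a(x, -w)) + D (u²)''`. The reflection symmetry `w ↦ -w` forces `D = 0`.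
-/

theorem mul_eq_mul_of_eq_neg_mul {R : Type*} [CommRing R] {a b a' b' e : R}
    (ha : a = -b' * e) (hb : b = -a' * e) : a * a' = b * b' := by
  rw [ha, hb]
  ring

section LaxSystem

variable {𝕜 : Type*} [NontriviallyNormedField 𝕜]

/-- The pair `(a, b)` solves the `x`-equation of the Lax pair for Painlevé II, with potential `u`
and spectral parameter `w`. Derivatives are given by `HasDerivAt`, so differentiability is part of
the notion. -/
structure IsLaxSolution_s9 (u : 𝕜 → 𝕜) (w : 𝕜) (a b : 𝕜 → 𝕜) : Prop where
  hasDerivAt_fst : ∀ x, HasDerivAt a (u x * b x) x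
  hasDerivAt_snd : ∀ x, HasDerivAt b (u x * a x - 2 * w * b x) x

/-- The bilinear expression `y` at a fixed spectral parameter `w`, which is a primitive of `a * a'`
up to a multiple of `u ^ 2`. The pair `(a', b')` stands for the solution at `-w`, and `v` for the
derivative of `u`. -/
def laxPrimitive (u v : 𝕜 → 𝕜) (w : 𝕜) (a b a' b' : 𝕜 → 𝕜) (x : 𝕜) : 𝕜 :=
  (2 * u x ^ 2 + x - 4 * w ^ 2) * a x * a' x
    - (v x + 2 * w * u x) * b x * a' x
    - (v x - 2 * w * u x) * a x * b' x

namespace IsLaxSolution_s9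

variable {u v a b a' b' : 𝕜 → 𝕜} {w x : 𝕜}

theorem of_deriv (ha : Differentiable 𝕜 a) (hb : Differentiable 𝕜 b)
    (hax : ∀ x, deriv a x = u x * b x) (hbx : ∀ x, deriv b x = u x * a x - 2 * w * b x) :
    IsLaxSolution_s9 u w a b where
  hasDerivAt_fst x := hax x ▸ (ha x).hasDerivAt
  hasDerivAt_snd x := hbx x ▸ (hb x).hasDerivAt

theorem hasDerivAt_fst_mul_fst {w' : 𝕜} (h : IsLaxSolution_s9 u w a b)
    (h' : IsLaxSolution_s9 u w' a' b') :
    HasDerivAt (fun x ↦ a x * a' x) (u x * b x * a' x + u x * a x * b' x) x :=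
  ((h.hasDerivAt_fst x).fun_mul (h'.hasDerivAt_fst x)).congr_deriv (by ring)

theorem hasDerivAt_fst_mul_fst_sub_snd_mul_snd (h : IsLaxSolution_s9 u w a b)
    (h' : IsLaxSolution_s9 u (-w) a' b') :
    HasDerivAt (fun x ↦ a x * a' x - b x * b' x) 0 x :=
  ((h.hasDerivAt_fst_mul_fst h').fun_sub
    ((h.hasDerivAt_snd x).fun_mul (h'.hasDerivAt_snd x))).congr_deriv (by ring)

theorem hasDerivAt_laxPrimitive (h : IsLaxSolution_s9 u w a b) (h' : IsLaxSolution_s9 u (-w) a' b')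
    (hu : HasDerivAt u (v x) x) (hv : HasDerivAt v (2 * u x ^ 3 + x * u x) x) :
    HasDerivAt (laxPrimitive u v w a b a' b')
      (a x * a' x + 2 * (u x * v x) * (a x * a' x - b x * b' x)) x := by
  have hcoeff : HasDerivAt (fun x ↦ 2 * u x ^ 2 + x - 4 * w ^ 2) (4 * u x * v x + 1) x :=
    ((((hu.fun_pow 2).const_mul 2).fun_add (hasDerivAt_id' x)).sub_const _).congr_deriv
      (by push_cast; ring)
  have hwu : HasDerivAt (fun x ↦ 2 * w * u x) (2 * w * v x) x := hu.const_mul _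
  have ha := h.hasDerivAt_fst x
  have ha' := h'.hasDerivAt_fst x
  have haa' := (hcoeff.fun_mul ha).fun_mul ha'
  have hba' := ((hv.fun_add hwu).fun_mul (h.hasDerivAt_snd x)).fun_mul ha'
  have hab' := ((hv.fun_sub hwu).fun_mul ha).fun_mul (h'.hasDerivAt_snd x)
  exact ((haa'.fun_sub hba').fun_sub hab').congr_deriv (by ring)

theorem iteratedDeriv_two_laxPrimitive (h : IsLaxSolution_s9 u w a b)
    (h' : IsLaxSolution_s9 u (-w) a' b') (hu : ∀ x, HasDerivAt u (v x) x)
    (hv : ∀ x, HasDerivAt v (2 * u x ^ 3 + x * u x) x) :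
    iteratedDeriv 2 (laxPrimitive u v w a b a' b') x
      = u x * b x * a' x + u x * a x * b' x
        + 2 * (v x ^ 2 + u x * (2 * u x ^ 3 + x * u x)) * (a x * a' x - b x * b' x) := by
  have hderiv : deriv (laxPrimitive u v w a b a' b')
      = fun x ↦ a x * a' x + 2 * (u x * v x) * (a x * a' x - b x * b' x) :=
    funext fun x ↦ (h.hasDerivAt_laxPrimitive h' (hu x) (hv x)).deriv
  have huv : HasDerivAt (fun x ↦ 2 * (u x * v x))
      (2 * (v x ^ 2 + u x * (2 * u x ^ 3 + x * u x))) x :=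
    (((hu x).fun_mul (hv x)).const_mul 2).congr_deriv (by ring)
  rw [iteratedDeriv_succ, iteratedDeriv_one, hderiv]
  exact (((h.hasDerivAt_fst_mul_fst h').fun_add
    (huv.fun_mul (h.hasDerivAt_fst_mul_fst_sub_snd_mul_snd h'))).congr_deriv (by ring)).deriv

end IsLaxSolution_s9

theorem painleveII_y_deriv_x_two_general {u : 𝕜 → 𝕜} {a b y : 𝕜 → 𝕜 → 𝕜}
    (hu : Differentiable 𝕜 u) (hu' : Differentiable 𝕜 (deriv u))
    (hP2 : ∀ x, deriv (deriv u) x = 2 * u x ^ 3 + x * u x)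
    (ha : ∀ w, Differentiable 𝕜 (fun x ↦ a x w)) (hb : ∀ w, Differentiable 𝕜 (fun x ↦ b x w))
    (hax : ∀ x w, deriv (fun x' ↦ a x' w) x = u x * b x w)
    (hbx : ∀ x w, deriv (fun x' ↦ b x' w) x = u x * a x w - 2 * w * b x w)
    (hy : ∀ x w, y x w
      = (2 * u x ^ 2 + x - 4 * w ^ 2) * a x w * a x (-w)
        - (deriv u x + 2 * w * u x) * b x w * a x (-w)
        - (deriv u x - 2 * w * u x) * a x w * b x (-w))
    (x w : 𝕜) :
    iteratedDeriv 2 (fun x' ↦ y x' w) x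
      = u x * b x w * a x (-w) + u x * a x w * b x (-w)
        + 2 * (deriv u x ^ 2 + u x * (2 * u x ^ 3 + x * u x))
          * (a x w * a x (-w) - b x w * b x (-w)) := by
  have hlax (w : 𝕜) : IsLaxSolution_s9 u w (a · w) (b · w) :=
    .of_deriv (ha w) (hb w) (hax · w) (hbx · w)
  have hyw : (fun x' ↦ y x' w)
      = laxPrimitive u (deriv u) w (a · w) (b · w) (a · (-w)) (b · (-w)) :=
    funext (hy · w)
  rw [hyw]
  exact (hlax w).iteratedDeriv_two_laxPrimitive (hlax (-w)) (fun x ↦ (hu x).hasDerivAt)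
    fun x ↦ hP2 x ▸ (hu' x).hasDerivAt

end LaxSystem

/-- second x-derivative of y in the Painlevé II system. -/
theorem painleveII_y_deriv_x_two
    (u : ℝ → ℝ) (a b y : ℝ → ℝ → ℝ)
    (hu : ContDiff ℝ (⊤ : ℕ∞) u)
    (hP2 : ∀ x : ℝ, deriv (deriv u) x = 2 * u x ^ 3 + x * u x)
    (ha : ContDiff ℝ (⊤ : ℕ∞) (fun p : ℝ × ℝ => a p.1 p.2))
    (hb : ContDiff ℝ (⊤ : ℕ∞) (fun p : ℝ × ℝ => b p.1 p.2))
    (hax : ∀ x w : ℝ, deriv (fun x' => a x' w) x = u x * b x w)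
    (hbx : ∀ x w : ℝ, deriv (fun x' => b x' w) x = u x * a x w - 2 * w * b x w)
    (haw : ∀ x w : ℝ, deriv (fun w' => a x w') w
      = 2 * u x ^ 2 * a x w - (4 * w * u x + 2 * deriv u x) * b x w)
    (hbw : ∀ x w : ℝ, deriv (fun w' => b x w') w
      = (-(4 * w * u x) + 2 * deriv u x) * a x w
        + (8 * w ^ 2 - 2 * x - 2 * u x ^ 2) * b x w)
    (hab : ∀ x w : ℝ, a x w = -b x (-w) * Real.exp (8 * w ^ 3 / 3 - 2 * w * x))
    (hba : ∀ x w : ℝ, b x w = -a x (-w) * Real.exp (8 * w ^ 3 / 3 - 2 * w * x))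
    (hy : ∀ x w : ℝ, y x w
      = (2 * u x ^ 2 + x - 4 * w ^ 2) * a x w * a x (-w)
        - (deriv u x + 2 * w * u x) * b x w * a x (-w)
        - (deriv u x - 2 * w * u x) * a x w * b x (-w)) :
    ∀ x w : ℝ, iteratedDeriv 2 (fun x' => y x' w) x
      = u x * b x w * a x (-w) + u x * a x w * b x (-w) := by
  intro x w
  have ha_x (w : ℝ) : Differentiable ℝ (fun x ↦ a x w) :=
    (ha.comp (contDiff_prodMk_left w)).differentiable (by simp)
  have hb_x (w : ℝ) : Differentiable ℝ (fun x ↦ b x w) :=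
    (hb.comp (contDiff_prodMk_left w)).differentiable (by simp)
  have hdu : Differentiable ℝ (deriv u) :=
    (contDiff_infty_iff_deriv.1 hu).2.differentiable (by simp)
  rw [painleveII_y_deriv_x_two_general (hu.differentiable (by simp)) hdu hP2 ha_x hb_x hax hbx hy,
    mul_eq_mul_of_eq_neg_mul (hab x w) (hba x w), sub_self, mul_zero, add_zero]
end
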